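/- Let 0 < α < ρ_c^0. Then 4α(1−α) k(0)/k(1) < 1, and every continuously differentiable function ρ : [0,1] → [0,1] satisfying the reduced ODE (1 − 2ρ(ξ)) ρ'(ξ) = −g(ξ) ρ(ξ)(1 − ρ(ξ)) on [0,1] with ρ(0) = α has terminal value ρ(1) = ρ*(α) := (1/2)(1 − √(1 − 4α(1−α) k(0)/k(1))). -/

import Mathlib

open Set

/-!
The reduced ODE says that the flux `k ρ (1 - ρ)` is conserved, so `4 ρ (1 - ρ)` at `ξ` equals
`4 α (1 - α) k(0) / k(ξ)`. Below the critical density this quantity stays below `1`; a solution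
therefore never reaches `ρ = 1/2`, and by continuity it remains on the lower of the two branches
`(1 ± √(1 - q)) / 2` of the equation `4 ρ (1 - ρ) = q`.
-/

/-- The low-density branch: the smaller solution `r` of `4 * r * (1 - r) = q`. It is `ρ_c^0` at
`q = k(ξ*)/k(0)` and `ρ*(α)` at `q = 4α(1-α)k(0)/k(1)`. For `q > 1`, where there is no real
solution, it takes the value `1 / 2`. -/
noncomputable def lowDensityRoot (q : ℝ) : ℝ :=
  1 / 2 * (1 - √(1 - q))

theorem lt_lowDensityRoot_iff {r q : ℝ} :
    r < lowDensityRoot q ↔ r < 1 / 2 ∧ 4 * r * (1 - r) < q := by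
  have sqrt_lt_iff : r < lowDensityRoot q ↔ √(1 - q) < 1 - 2 * r := by
    unfold lowDensityRoot
    constructor <;> intro h <;> linarith
  have sq_iff : 1 - q < (1 - 2 * r) ^ 2 ↔ 4 * r * (1 - r) < q := by
    constructor <;> intro h <;> linarith
  rw [sqrt_lt_iff, ← sq_iff]
  constructor
  · intro h
    have hr : 0 < 1 - 2 * r := (Real.sqrt_nonneg _).trans_lt h
    exact ⟨by linarith, (Real.sqrt_lt' hr).1 h⟩
  · rintro ⟨hr, h⟩
    exact (Real.sqrt_lt' (by linarith)).2 h

theorem lowDensityRoot_four_mul_mul_one_sub {r : ℝ} (hr : r ≤ 1 / 2) :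
    lowDensityRoot (4 * r * (1 - r)) = r := by
  have discriminant : 1 - 4 * r * (1 - r) = (1 - 2 * r) ^ 2 := by ring
  rw [lowDensityRoot, discriminant, Real.sqrt_sq (by linarith)]
  ring

theorem lt_of_isPreconnected_of_forall_ne {X Y : Type*} [TopologicalSpace X] [LinearOrder Y]
    [TopologicalSpace Y] [OrderClosedTopology Y] {s : Set X} {f : X → Y} {a x : X} {c : Y}
    (hs : IsPreconnected s) (hf : ContinuousOn f s) (hne : ∀ y ∈ s, f y ≠ c) (ha : a ∈ s)
    (hx : x ∈ s) (hac : f a < c) : f x < c := by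
  by_contra! hcx
  obtain ⟨y, hy, hyc⟩ := hs.intermediate_value ha hx hf ⟨hac.le, hcx⟩
  exact hne y hy hyc

/-- The flux `k ρ (1 - ρ)` of a density `ρ`, the conserved quantity of the reduced ODE. -/
def flux (k ρ : ℝ → ℝ) (ξ : ℝ) : ℝ :=
  k ξ * (ρ ξ * (1 - ρ ξ))

/-- The pair `ρ`, `ρ'` solves the reduced ODE with `g = k' / k` on `s`, where `ρ'` is the derivative
of `ρ` within `s`, hence one-sided at the endpoints of an interval. The derivative is carried as a
separate function, like `k'` for `k`, to avoid the junk value of `derivWithin`. -/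
structure IsReducedSolution (k k' : ℝ → ℝ) (s : Set ℝ) (ρ ρ' : ℝ → ℝ) : Prop where
  hasDerivWithinAt : ∀ ξ ∈ s, HasDerivWithinAt ρ (ρ' ξ) s ξ
  ode : ∀ ξ ∈ s, (1 - 2 * ρ ξ) * ρ' ξ = -(k' ξ / k ξ) * ρ ξ * (1 - ρ ξ)

namespace IsReducedSolution

variable {k k' ρ ρ' : ℝ → ℝ} {s : Set ℝ} {a x : ℝ}

theorem continuousOn (hρ : IsReducedSolution k k' s ρ ρ') : ContinuousOn ρ s :=
  fun ξ hξ => (hρ.hasDerivWithinAt ξ hξ).continuousWithinAt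

theorem hasDerivWithinAt_flux_zero (hρ : IsReducedSolution k k' s ρ ρ') (hx : x ∈ s)
    (hkx : k x ≠ 0) (hk : HasDerivWithinAt k (k' x) s x) :
    HasDerivWithinAt (flux k ρ) 0 s x := by
  have hρx := hρ.hasDerivWithinAt x hx
  refine (hk.fun_mul (hρx.fun_mul (hρx.const_sub 1))).congr_deriv ?_
  calc k' x * (ρ x * (1 - ρ x)) + k x * (ρ' x * (1 - ρ x) + ρ x * -ρ' x)
      = k' x * (ρ x * (1 - ρ x)) + k x * ((1 - 2 * ρ x) * ρ' x) := by ring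
    _ = k' x * (ρ x * (1 - ρ x)) + k x * (-(k' x / k x) * ρ x * (1 - ρ x)) := by
      rw [hρ.ode x hx]
    _ = 0 := by field_simp; ring

theorem flux_eq (hρ : IsReducedSolution k k' s ρ ρ') (hs : Convex ℝ s) (ha : a ∈ s) (hx : x ∈ s)
    (hk0 : ∀ ξ ∈ s, k ξ ≠ 0) (hk : ∀ ξ ∈ s, HasDerivWithinAt k (k' ξ) s ξ) :
    flux k ρ x = flux k ρ a := by
  have bound := hs.norm_image_sub_le_of_norm_hasDerivWithin_le (C := 0)
    (fun ξ hξ => hρ.hasDerivWithinAt_flux_zero hξ (hk0 ξ hξ) (hk ξ hξ))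
    (fun _ _ => norm_zero.le) ha hx
  rw [zero_mul] at bound
  exact sub_eq_zero.1 (norm_le_zero_iff.1 bound)

theorem four_mul_mul_one_sub_eq (hρ : IsReducedSolution k k' s ρ ρ') (hs : Convex ℝ s)
    (ha : a ∈ s) (hx : x ∈ s) (hk0 : ∀ ξ ∈ s, k ξ ≠ 0)
    (hk : ∀ ξ ∈ s, HasDerivWithinAt k (k' ξ) s ξ) :
    4 * ρ x * (1 - ρ x) = 4 * ρ a * (1 - ρ a) * k a / k x := by
  have conserved : k x * (ρ x * (1 - ρ x)) = k a * (ρ a * (1 - ρ a)) :=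
    hρ.flux_eq hs ha hx hk0 hk
  rw [eq_div_iff (hk0 x hx)]
  linear_combination 4 * conserved

theorem eq_lowDensityRoot (hρ : IsReducedSolution k k' s ρ ρ') (hs : Convex ℝ s) (ha : a ∈ s)
    (hk0 : ∀ ξ ∈ s, k ξ ≠ 0) (hk : ∀ ξ ∈ s, HasDerivWithinAt k (k' ξ) s ξ)
    (hρa : ρ a < 1 / 2) (hlt : ∀ ξ ∈ s, 4 * ρ a * (1 - ρ a) * k a / k ξ < 1) (hx : x ∈ s) :
    ρ x = lowDensityRoot (4 * ρ a * (1 - ρ a) * k a / k x) := by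
  have ne_half : ∀ ξ ∈ s, ρ ξ ≠ 1 / 2 := by
    intro ξ hξ h
    have hξ_lt := hlt ξ hξ
    rw [← hρ.four_mul_mul_one_sub_eq hs ha hξ hk0 hk, h] at hξ_lt
    norm_num at hξ_lt
  have lt_half : ρ x < 1 / 2 :=
    lt_of_isPreconnected_of_forall_ne hs.isPreconnected hρ.continuousOn ne_half ha hx hρa
  rw [← hρ.four_mul_mul_one_sub_eq hs ha hx hk0 hk, lowDensityRoot_four_mul_mul_one_sub lt_half.le]

end IsReducedSolution

theorem four_mul_mul_one_sub_mul_div_lt_one {r ka kx m : ℝ} (hka : 0 < ka) (hkx : 0 < kx)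
    (hm : m ≤ kx) (hr : r < lowDensityRoot (m / ka)) : 4 * r * (1 - r) * ka / kx < 1 :=
  (div_lt_one hkx).2 (((lt_div_iff₀ hka).1 (lt_lowDensityRoot_iff.1 hr).2).trans_le hm)

theorem reduced_solution_terminal_value_low_density_general
    {k k' : ℝ → ℝ} {s : Set ℝ} {a m α : ℝ} (hs : Convex ℝ s) (ha : a ∈ s)
    (hk : ∀ x ∈ s, HasDerivWithinAt k (k' x) s x) (hkpos : ∀ x ∈ s, 0 < k x)
    (hm : ∀ x ∈ s, m ≤ k x) (hα : α < lowDensityRoot (m / k a)) :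
    (∀ x ∈ s, 4 * α * (1 - α) * k a / k x < 1) ∧
    ∀ ρ ρ' : ℝ → ℝ, IsReducedSolution k k' s ρ ρ' → ρ a = α →
      ∀ x ∈ s, ρ x = lowDensityRoot (4 * α * (1 - α) * k a / k x) := by
  have hlt : ∀ x ∈ s, 4 * α * (1 - α) * k a / k x < 1 := fun x hx =>
    four_mul_mul_one_sub_mul_div_lt_one (hkpos a ha) (hkpos x hx) (hm x hx) hα
  refine ⟨hlt, ?_⟩
  rintro ρ ρ' hρ rfl x hx
  exact hρ.eq_lowDensityRoot hs ha (fun ξ hξ => (hkpos ξ hξ).ne') hk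
    (lt_lowDensityRoot_iff.1 hα).1 hlt hx

/-- For `0 < α < ρ_c^0 = (1/2)(1-√(1-k(ξ*)/k(0)))` one has
`4α(1-α)k(0)/k(1) < 1`, and every continuously differentiable solution
`ρ : [0,1] → [0,1]` of the reduced ODE with `ρ(0) = α` has the terminal value
`ρ(1) = ρ*(α) = (1/2)(1 - √(1 - 4α(1-α)k(0)/k(1)))`. -/
theorem reduced_solution_terminal_value_low_density
    (k : ℝ → ℝ) (ξs : ℝ)
    (hk : ContDiff ℝ 2 k)
    (hkpos : ∀ x ∈ Icc (0:ℝ) 1, 0 < k x)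
    (hξs : ξs ∈ Ioo (0:ℝ) 1)
    (hmin : ∀ x ∈ Icc (0:ℝ) 1, x ≠ ξs → k ξs < k x)
    (hk's : deriv k ξs = 0)
    (hk''s : 0 < deriv (deriv k) ξs)
    (α : ℝ) (hα0 : 0 < α)
    (hα : α < 1/2 * (1 - Real.sqrt (1 - k ξs / k 0))) :
    4 * α * (1 - α) * k 0 / k 1 < 1 ∧
    ∀ ρ ρ' : ℝ → ℝ,
      (∀ ξ ∈ Icc (0:ℝ) 1, ρ ξ ∈ Icc (0:ℝ) 1) →
      (∀ ξ ∈ Icc (0:ℝ) 1, HasDerivWithinAt ρ (ρ' ξ) (Icc (0:ℝ) 1) ξ) →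
      ContinuousOn ρ' (Icc (0:ℝ) 1) →
      (∀ ξ ∈ Icc (0:ℝ) 1,
        (1 - 2 * ρ ξ) * ρ' ξ = -(deriv k ξ / k ξ) * ρ ξ * (1 - ρ ξ)) →
      ρ 0 = α →
      ρ 1 = 1/2 * (1 - Real.sqrt (1 - 4 * α * (1 - α) * k 0 / k 1)) := by
  have hle : ∀ x ∈ Icc (0:ℝ) 1, k ξs ≤ k x := fun x hx =>
    (eq_or_ne x ξs).elim (fun h => h ▸ le_rfl) (fun h => (hmin x hx h).le)
  have hk' : ∀ x ∈ Icc (0:ℝ) 1, HasDerivWithinAt k (deriv k x) (Icc (0:ℝ) 1) x := fun x _ =>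
    (hk.differentiable two_ne_zero x).hasDerivAt.hasDerivWithinAt
  obtain ⟨hlt, hsol⟩ := reduced_solution_terminal_value_low_density_general (convex_Icc 0 1)
    (left_mem_Icc.2 zero_le_one) hk' hkpos hle hα
  have h1 : (1:ℝ) ∈ Icc (0:ℝ) 1 := right_mem_Icc.2 zero_le_one
  exact ⟨hlt 1 h1, fun ρ ρ' _ hd _ hode hρ0 => hsol ρ ρ' ⟨hd, hode⟩ hρ0 1 h1⟩
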